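/- Let G be a finite group. There exists a family (p_U), indexed by the conjugacy classes of subgroups U ≤ G, where p_U is a polynomial with integer coefficients in the variables a_V, b_V indexed by the conjugacy classes of subgroups V ≤ G with U subconjugate to V, such that for every commutative ring R, every subgroup H ≤ G, and all x = (x_V)'_{V ≤ G}, y = (y_V)'_{V ≤ G} ∈ W_G(R): φ_H(x) · φ_H(y) = φ_H((p_U(x_V, y_V | U ⪯ V ≤ G))'_{U ≤ G}). -/

import Mathlib

open MulAction Pointwise
open scoped Classical

/-- The set of conjugacy classes of subgroups of `G`: the quotient of the set of
subgroups of `G` by the conjugation action of `G`. -/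
abbrev SubgroupConjClasses (G : Type*) [Group G] :=
  MulAction.orbitRel.Quotient (ConjAct G) (Subgroup G)

/-- `U` is subconjugate to `V`: `U ≤ gVg⁻¹` for some `g ∈ G`. -/
def Subconj {G : Type*} [Group G] (U V : Subgroup G) : Prop :=
  ∃ g : ConjAct G, U ≤ g • V

/-- The ghost map `φ_U : W_G(R) → R`,
`φ_U(x) = Σ'_{U ⪯ V ≤ G} |(G/V)^U| · x_V^{(V:U)}`, with exactly one summand for
each conjugacy class of subgroups `V` of `G` to which `U` is subconjugate. -/
noncomputable def ghost {G : Type*} [Group G] [Fintype G] {R : Type*} [CommRing R]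
    (U : Subgroup G) (x : SubgroupConjClasses G → R) : R :=
  ∑ᶠ C : SubgroupConjClasses G,
    if Subconj U (Quotient.out C) then
      (Nat.card (MulAction.fixedPoints U (G ⧸ (Quotient.out C : Subgroup G))) : R) *
        x C ^ (Nat.card (Quotient.out C : Subgroup G) / Nat.card U)
    else 0

/-! `ghost U x` is the value at `U` of the sum of the marks of the transitive `G`-sets `G ⧸ V` with
constant weights `x V`. The product of the marks of two weighted finite `G`-sets is the mark of a
weight on their product, and a weighted `G`-set decomposes into its orbits; so a product of ghost
vectors is a sum of marks of orbits. To collect the orbits of the same type, expand `(a + b) ^ |V|`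
over the subsets of the cosets of `V`: the mark of `G ⧸ V` is additive in the weight up to marks of
subgroups smaller than `V`. By induction on the order of the subgroups, every sum of marks of orbits
is a ghost vector, over every commutative ring. Over the polynomial ring in the `a V` and `b V` this
gives universal polynomials. Since a polynomial with a nonzero multiple in a given set of variables
is itself a polynomial in these variables, solving the triangular system for the `p V` from the top
down shows that `p U` involves only variables indexed by the subgroups above `U`. -/

section Stabilizer

variable {G S T : Type*} [Group G] [MulAction G S] [MulAction G T]

theorem stabilizer_prod (p : S × T) :
    stabilizer G p = stabilizer G p.1 ⊓ stabilizer G p.2 := by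
  ext g
  simp only [mem_stabilizer_iff, Prod.ext_iff, Prod.smul_fst, Prod.smul_snd, Subgroup.mem_inf]

theorem stabilizer_map_of_injective {f : S →[G] T} (hf : Function.Injective f) (s : S) :
    stabilizer G (f s) = stabilizer G s := by
  ext g
  rw [mem_stabilizer_iff, mem_stabilizer_iff, ← map_smul, hf.eq_iff]

theorem indicator_compl_range_smul {R : Type*} [Zero R] (f : S →[G] T) {w : T → R}
    (hw : ∀ (g : G) t, w (g • t) = w t) (g : G) (t : T) :
    (Set.range f)ᶜ.indicator w (g • t) = (Set.range f)ᶜ.indicator w t := by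
  have mem_range_iff : g • t ∈ Set.range f ↔ t ∈ Set.range f := by
    refine ⟨fun ⟨s, hs⟩ => ⟨g⁻¹ • s, ?_⟩, fun ⟨s, hs⟩ => ⟨g • s, ?_⟩⟩
    · rw [map_smul, hs, inv_smul_smul]
    · rw [map_smul, hs]
  simp only [Set.indicator_apply, Set.mem_compl_iff, mem_range_iff, hw]

theorem mem_fixedPoints_iff_le_stabilizer {U : Subgroup G} {s : S} :
    s ∈ fixedPoints U S ↔ U ≤ stabilizer G s :=
  ⟨fun h g hg => h ⟨g, hg⟩, fun h g => h g.2⟩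

theorem card_stabilizer_smul (g : G) (s : S) :
    Nat.card (stabilizer G (g • s)) = Nat.card (stabilizer G s) :=
  (Nat.card_congr (stabilizerEquivStabilizer rfl).toEquiv).symm

theorem card_stabilizer_quotient {V : Subgroup G} (s : G ⧸ V) :
    Nat.card (stabilizer G s) = Nat.card V := by
  obtain ⟨g, rfl⟩ := MulAction.exists_smul_eq G ((1 : G) : G ⧸ V) s
  rw [card_stabilizer_smul, stabilizer_quotient]

theorem relIndex_stabilizer_smul (g : G) (s : S) (t : T) :
    (stabilizer G (g • s)).relIndex (stabilizer G (g • t)) =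
      (stabilizer G s).relIndex (stabilizer G t) := by
  rw [stabilizer_smul_eq_stabilizer_map_conj, stabilizer_smul_eq_stabilizer_map_conj,
    Subgroup.relIndex_map_map_of_injective _ _ (MulAut.conj g).injective]

theorem card_mul_relIndex {U V : Subgroup G} (h : U ≤ V) :
    Nat.card U * U.relIndex V = Nat.card V := by
  rw [← Subgroup.relIndex_bot_left, Subgroup.relIndex_mul_relIndex _ _ _ bot_le h,
    Subgroup.relIndex_bot_left]

theorem relIndex_ne_zero_of_finite (U V : Subgroup G) [Finite V] : U.relIndex V ≠ 0 :=
  Subgroup.index_ne_zero_of_finite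

theorem relIndex_eq_card_div_card [Finite G] {U V : Subgroup G} (h : U ≤ V) :
    U.relIndex V = Nat.card V / Nat.card U := by
  rw [← card_mul_relIndex h, Nat.mul_div_cancel_left _ Nat.card_pos]

theorem div_card_mul_relIndex [Finite G] {U V : Subgroup G} (h : U ≤ V) {n : ℕ}
    (hn : Nat.card V ∣ n) : n / Nat.card V * U.relIndex V = n / Nat.card U := by
  rw [← Nat.mul_div_cancel (n / Nat.card V * U.relIndex V) (Nat.card_pos (α := U)), mul_assoc,
    mul_comm (U.relIndex V), card_mul_relIndex h, Nat.div_mul_cancel hn]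

theorem card_conjAct_smul (g : ConjAct G) (V : Subgroup G) :
    Nat.card (g • V : Subgroup G) = Nat.card V :=
  (Nat.card_congr (Subgroup.equivSMul g V).toEquiv).symm

theorem stabilizer_mk_eq_conjAct_smul (g : G) (V : Subgroup G) :
    stabilizer G (g : G ⧸ V) = ConjAct.toConjAct g • V := by
  have : (g : G ⧸ V) = g • ((1 : G) : G ⧸ V) := by rw [Quotient.smul_mk, smul_eq_mul, mul_one]
  rw [this, stabilizer_smul_eq_stabilizer_map_conj, stabilizer_quotient]
  rfl

theorem exists_conjAct_smul_eq_out_mk (V : Subgroup G) :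
    ∃ g : ConjAct G, g • V = (Quotient.mk'' V : SubgroupConjClasses G).out :=
  Quotient.mk_out (s := orbitRel (ConjAct G) (Subgroup G)) V

theorem card_out_mk (V : Subgroup G) :
    Nat.card (Quotient.mk'' V : SubgroupConjClasses G).out = Nat.card V := by
  obtain ⟨g, hg⟩ := exists_conjAct_smul_eq_out_mk V
  rw [← hg, card_conjAct_smul]

end Stabilizer

section WeightedMark

/-- The mark at a subgroup `U` of a finite `G`-set `S` with weights `w : S → R`: the sum of
`w s ^ (G_s : U)` over the `U`-fixed points `s`, where `G_s` is the stabilizer of `s`. With `w = 1`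
this is the number `|S^U|`, and with `w` constant on `S = G ⧸ V` it is a summand of `ghost U`. -/
noncomputable def weightedMark (G : Type*) {S R : Type*} [Group G] [MulAction G S]
    [CommSemiring R] (w : S → R) (U : Subgroup G) : R :=
  ∑ᶠ s, if U ≤ stabilizer G s then w s ^ U.relIndex (stabilizer G s) else 0

variable {G S T R : Type*} [Group G] [MulAction G S] [MulAction G T] [CommSemiring R]

theorem weightedMark_eq_sum [Fintype S] (w : S → R) (U : Subgroup G) :
    weightedMark G w U =
      ∑ s : S with U ≤ stabilizer G s, w s ^ U.relIndex (stabilizer G s) := by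
  rw [weightedMark, finsum_eq_sum_of_fintype, Finset.sum_filter]

theorem weightedMark_comp_of_bijective {f : S →[G] T} (hf : Function.Bijective f) (w : T → R) :
    weightedMark G (w ∘ f) = weightedMark G w := by
  funext U
  refine finsum_eq_of_bijective f hf fun s => ?_
  rw [Function.comp_apply, stabilizer_map_of_injective hf.injective]

theorem weightedMark_eq_comp_add [Finite G] [Finite S] [Finite T] {f : S →[G] T}
    (hf : Function.Injective f) (w : T → R) :
    weightedMark G w = weightedMark G (w ∘ f) + weightedMark G ((Set.range f)ᶜ.indicator w) := by
  cases nonempty_fintype S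
  cases nonempty_fintype T
  funext U
  have sum_range : weightedMark G (w ∘ f) U = ∑ t : T with U ≤ stabilizer G t,
      (Set.range f).indicator w t ^ U.relIndex (stabilizer G t) := by
    rw [weightedMark_eq_sum]
    refine Finset.sum_of_injOn f hf.injOn (fun s hs => ?_) (fun t ht hts => ?_) fun s _ => ?_
    · simpa [stabilizer_map_of_injective hf] using hs
    · rw [Set.indicator_of_notMem, zero_pow (relIndex_ne_zero_of_finite _ _)]
      rintro ⟨s, rfl⟩
      exact hts ⟨s, by simpa [stabilizer_map_of_injective hf] using ht, rfl⟩
    · rw [Set.indicator_of_mem (Set.mem_range_self s), Function.comp_apply,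
        stabilizer_map_of_injective hf]
  rw [Pi.add_apply, sum_range, weightedMark_eq_sum, weightedMark_eq_sum, ← Finset.sum_add_distrib]
  refine Finset.sum_congr rfl fun t _ => ?_
  by_cases ht : t ∈ Set.range f <;> simp [ht, relIndex_ne_zero_of_finite]

theorem weightedMark_mul [Finite S] [Finite T] (w : S → R) (v : T → R) :
    weightedMark G w * weightedMark G v = weightedMark G fun p : S × T =>
      w p.1 ^ (stabilizer G p).relIndex (stabilizer G p.1) *
        v p.2 ^ (stabilizer G p).relIndex (stabilizer G p.2) := by
  cases nonempty_fintype S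
  cases nonempty_fintype T
  funext U
  rw [Pi.mul_apply, weightedMark_eq_sum, weightedMark_eq_sum, weightedMark_eq_sum,
    Finset.sum_mul_sum, ← Finset.sum_product']
  refine Finset.sum_congr ?_ fun p hp => ?_
  · ext p
    simp only [Finset.mem_product, Finset.mem_filter_univ, stabilizer_prod, le_inf_iff]
  · have hU : U ≤ stabilizer G p := by
      simpa only [Finset.mem_product, Finset.mem_filter_univ, ← le_inf_iff, ← stabilizer_prod]
        using hp
    have hp_le : stabilizer G p ≤ stabilizer G p.1 ⊓ stabilizer G p.2 :=
      (stabilizer_prod p).le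
    rw [mul_pow, ← pow_mul', ← pow_mul',
      Subgroup.relIndex_mul_relIndex _ _ _ hU (hp_le.trans inf_le_left),
      Subgroup.relIndex_mul_relIndex _ _ _ hU (hp_le.trans inf_le_right)]

end WeightedMark

section OrbitMark

variable {G R : Type*} [Group G] [CommSemiring R]

/-- The mark of the transitive `G`-set `G ⧸ V` with constant weight `a`; by
`orbitMark_apply` its value at `U` is the summand `|(G/V)^U| · a ^ (V:U)` of the ghost map. -/
noncomputable def orbitMark (V : Subgroup G) (a : R) : Subgroup G → R :=
  weightedMark G fun _ : G ⧸ V => a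

theorem orbitMark_stabilizer (V : Subgroup G) (s : G ⧸ V) (a : R) :
    orbitMark (stabilizer G s) a = orbitMark V a := by
  let f : G ⧸ stabilizer G s →[G] G ⧸ V :=
    { toFun := ofQuotientStabilizer G s
      map_smul' := ofQuotientStabilizer_smul G s }
  have hf : Function.Bijective f := by
    refine ⟨injective_ofQuotientStabilizer G s, fun t => ?_⟩
    obtain ⟨g, hg⟩ := MulAction.exists_smul_eq G s t
    exact ⟨(g : G ⧸ stabilizer G s), hg⟩
  exact weightedMark_comp_of_bijective hf fun _ => a

theorem orbitMark_conjAct_smul (g : ConjAct G) (V : Subgroup G) (a : R) :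
    orbitMark (g • V) a = orbitMark V a := by
  rw [← ConjAct.toConjAct_ofConjAct g, ← stabilizer_mk_eq_conjAct_smul, orbitMark_stabilizer]

theorem orbitMark_out_mk (V : Subgroup G) (a : R) :
    orbitMark (Quotient.mk'' V : SubgroupConjClasses G).out a = orbitMark V a := by
  obtain ⟨g, hg⟩ := exists_conjAct_smul_eq_out_mk V
  rw [← hg, orbitMark_conjAct_smul]

variable [Finite G]

theorem orbitMark_apply (V : Subgroup G) (a : R) (U : Subgroup G) :
    orbitMark V a U =
      (Nat.card (fixedPoints U (G ⧸ V)) : R) * a ^ (Nat.card V / Nat.card U) := by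
  cases nonempty_fintype G
  have card_fixed : (Finset.univ.filter fun s : G ⧸ V => U ≤ stabilizer G s).card =
      Nat.card (fixedPoints U (G ⧸ V)) := by
    rw [← Fintype.card_subtype, ← Nat.card_eq_fintype_card]
    exact Nat.card_congr (Equiv.subtypeEquivRight fun _ => mem_fixedPoints_iff_le_stabilizer.symm)
  rw [← card_fixed, ← nsmul_eq_mul, ← Finset.sum_const, orbitMark, weightedMark_eq_sum]
  refine Finset.sum_congr rfl fun s hs => ?_
  rw [relIndex_eq_card_div_card ((Finset.mem_filter_univ s).1 hs), card_stabilizer_quotient]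

theorem orbitMark_zero (V : Subgroup G) : orbitMark V (0 : R) = 0 := by
  funext U
  refine finsum_eq_zero_of_forall_eq_zero fun s => ?_
  rw [zero_pow (relIndex_ne_zero_of_finite _ _), ite_self]

theorem weightedMark_eq_sum_orbitMark {S : Type*} [MulAction G S] [Fintype S] {w : S → R}
    (hw : ∀ (g : G) s, w (g • s) = w s) :
    weightedMark G w = ∑ ω : orbitRel.Quotient G S, orbitMark (stabilizer G ω.out) (w ω.out) := by
  cases nonempty_fintype G
  funext U
  rw [Finset.sum_apply, weightedMark, finsum_eq_sum_of_fintype,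
    ← (selfEquivSigmaOrbitsQuotientStabilizer G S).symm.sum_comp, Fintype.sum_sigma]
  refine Finset.sum_congr rfl fun ω _ => ?_
  rw [orbitMark, weightedMark, finsum_eq_sum_of_fintype]
  refine Finset.sum_congr rfl fun q _ => ?_
  obtain ⟨g, rfl⟩ := QuotientGroup.mk_surjective q
  let f : G ⧸ stabilizer G ω.out →[G] S :=
    { toFun := ofQuotientStabilizer G ω.out
      map_smul' := ofQuotientStabilizer_smul G ω.out }
  have hf : (selfEquivSigmaOrbitsQuotientStabilizer G S).symm
      ⟨ω, (g : G ⧸ stabilizer G ω.out)⟩ = f g := rfl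
  rw [hf, stabilizer_map_of_injective (injective_ofQuotientStabilizer G ω.out)]
  have : w (f g) = w ω.out := hw g _
  rw [this]

end OrbitMark

section StableSubset

variable {G : Type*} [Group G] [Finite G]

/-- The union of a set of left cosets of `U`, as a finset of elements of `G`. The inverses
`(cosetsUnion A)⁻¹` are the unions of right cosets, that is, the finsets stable under left
translation by `U`. -/
noncomputable def cosetsUnion {U : Subgroup G} (A : Finset (G ⧸ U)) : Finset G :=
  (Set.toFinite ((QuotientGroup.mk : G → G ⧸ U) ⁻¹' A)).toFinset

theorem mem_cosetsUnion {U : Subgroup G} {A : Finset (G ⧸ U)} {g : G} :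
    g ∈ cosetsUnion A ↔ (g : G ⧸ U) ∈ A := by
  rw [cosetsUnion, Set.Finite.mem_toFinset, Set.mem_preimage, Finset.mem_coe]

theorem card_cosetsUnion {U : Subgroup G} (A : Finset (G ⧸ U)) :
    (cosetsUnion A).card = Nat.card U * A.card := by
  rw [cosetsUnion, ← Set.ncard_eq_toFinset_card, ← Set.ncard_coe_finset, ← Nat.card_coe_set_eq,
    ← Nat.card_coe_set_eq, QuotientGroup.card_preimage_mk]

theorem inv_cosetsUnion_subset_inv_iff {U : Subgroup G} {A B : Finset (G ⧸ U)} :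
    (cosetsUnion A)⁻¹ ⊆ (cosetsUnion B)⁻¹ ↔ A ⊆ B := by
  rw [← Finset.coe_subset, Finset.coe_inv, Finset.coe_inv, Set.inv_subset_inv, Finset.coe_subset]
  simp only [Finset.subset_iff, mem_cosetsUnion, QuotientGroup.mk_surjective.forall]

theorem inv_cosetsUnion_injective (U : Subgroup G) :
    Function.Injective fun A : Finset (G ⧸ U) => (cosetsUnion A)⁻¹ :=
  fun _ _ h => (inv_cosetsUnion_subset_inv_iff.1 h.subset).antisymm
    (inv_cosetsUnion_subset_inv_iff.1 h.superset)

theorem smul_cosetsUnion {U : Subgroup G} (g : G) (A : Finset (G ⧸ U)) :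
    g • cosetsUnion A = cosetsUnion (g • A) := by
  ext h
  rw [← Finset.inv_smul_mem_iff, mem_cosetsUnion, mem_cosetsUnion, ← Finset.inv_smul_mem_iff]
  rfl

theorem stabilizer_le_stabilizer_cosetsUnion {U : Subgroup G} (s : G ⧸ U) :
    stabilizer G s ≤ stabilizer G (cosetsUnion {s}) := fun g hg => by
  rw [mem_stabilizer_iff, smul_cosetsUnion, Finset.smul_finset_singleton, mem_stabilizer_iff.1 hg]

theorem le_stabilizer_iff_exists_cosetsUnion {U : Subgroup G} {T : Finset G} :
    U ≤ stabilizer G T ↔ ∃ A : Finset (G ⧸ U), (cosetsUnion A)⁻¹ = T := by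
  refine ⟨fun hT => ⟨T.image fun g => ((g⁻¹ : G) : G ⧸ U), ?_⟩, ?_⟩
  · ext g
    simp only [Finset.mem_inv', mem_cosetsUnion, Finset.mem_image]
    refine ⟨?_, fun hg => ⟨g, hg, rfl⟩⟩
    rintro ⟨h, hh, hgh⟩
    have hu : g * h⁻¹ ∈ stabilizer G T := hT (by simpa using QuotientGroup.eq.1 hgh.symm)
    simpa [mem_stabilizer_iff.1 hu] using Finset.smul_mem_smul_finset (a := g * h⁻¹) hh
  · rintro ⟨A, rfl⟩ u hu
    ext g
    have mk_mul : ((g⁻¹ * u : G) : G ⧸ U) = (g⁻¹ : G) := QuotientGroup.mk_mul_of_mem _ hu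
    rw [← Finset.inv_smul_mem_iff, Finset.mem_inv', Finset.mem_inv', mem_cosetsUnion,
      mem_cosetsUnion, smul_eq_mul, mul_inv_rev, inv_inv, mk_mul]

theorem card_dvd_card_of_le_stabilizer {U : Subgroup G} {T : Finset G}
    (hT : U ≤ stabilizer G T) : Nat.card U ∣ T.card := by
  obtain ⟨A, rfl⟩ := le_stabilizer_iff_exists_cosetsUnion.1 hT
  rw [Finset.card_inv, card_cosetsUnion]
  exact dvd_mul_right _ _

theorem sum_pow_mul_pow_stable_subsets {R : Type*} [CommSemiring R] {U : Subgroup G} {F : Finset G}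
    (hF : U ≤ stabilizer G F) (a b : R) :
    ∑ T ∈ F.powerset with U ≤ stabilizer G T,
        a ^ (T.card / Nat.card U) * b ^ ((F.card - T.card) / Nat.card U) =
      (a + b) ^ (F.card / Nat.card U) := by
  obtain ⟨B, rfl⟩ := le_stabilizer_iff_exists_cosetsUnion.1 hF
  have card_div (n : ℕ) : Nat.card U * n / Nat.card U = n :=
    Nat.mul_div_cancel_left n Nat.card_pos
  rw [Finset.card_inv, card_cosetsUnion, card_div, ← Finset.sum_pow_mul_eq_add_pow]
  symm
  refine Finset.sum_nbij (fun A => (cosetsUnion A)⁻¹) (fun A hA => ?_)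
    (inv_cosetsUnion_injective U).injOn (fun T hT => ?_) fun A _ => ?_
  · rw [Finset.mem_filter, Finset.mem_powerset, inv_cosetsUnion_subset_inv_iff]
    exact ⟨Finset.mem_powerset.1 hA, le_stabilizer_iff_exists_cosetsUnion.2 ⟨A, rfl⟩⟩
  · obtain ⟨hTF, hT⟩ := Finset.mem_filter.1 hT
    obtain ⟨A, rfl⟩ := le_stabilizer_iff_exists_cosetsUnion.1 hT
    rw [Finset.mem_powerset, inv_cosetsUnion_subset_inv_iff] at hTF
    exact ⟨A, Finset.mem_powerset.2 hTF, rfl⟩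
  · rw [Finset.card_inv, card_cosetsUnion, ← Nat.mul_sub, card_div, card_div]

end StableSubset

section SplitWeight

variable {G : Type*} [Group G]

theorem card_stabilizer_dvd_card {V : Subgroup G} (p : (G ⧸ V) × Finset G) :
    Nat.card (stabilizer G p) ∣ Nat.card V :=
  card_stabilizer_quotient p.1 ▸
    Subgroup.card_dvd_of_le ((stabilizer_prod p).le.trans inf_le_left)

/-- The inclusion of `G`-sets `s ↦ (s, ∅)`. -/
def emptyPair (V : Subgroup G) : G ⧸ V →[G] (G ⧸ V) × Finset G where
  toFun s := (s, ∅)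
  map_smul' g s := by rw [Prod.smul_mk, Finset.smul_finset_empty]; rfl

theorem emptyPair_injective (V : Subgroup G) : Function.Injective (emptyPair V) :=
  fun _ _ h => congrArg Prod.fst h

variable {R : Type*} [Finite G] [CommSemiring R]

/-- The weight on pairs `(s, T)` of a coset `s` of `V` and a finset `T` which encodes the binomial
expansion of `(a + b) ^ |V|`: a subset `T ⊆ s` is read as choosing `a` on `T` and `b` on `s \ T`,
and the exponents are divided by the order of the stabilizer because the mark raises the weight to
that order. -/
noncomputable def splitWeight {V : Subgroup G} (a b : R) (p : (G ⧸ V) × Finset G) : R :=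
  if p.2 ⊆ cosetsUnion {p.1} then
    a ^ (p.2.card / Nat.card (stabilizer G p)) *
      b ^ ((Nat.card V - p.2.card) / Nat.card (stabilizer G p))
  else 0

theorem splitWeight_smul {V : Subgroup G} (a b : R) (g : G) (p : (G ⧸ V) × Finset G) :
    splitWeight a b (g • p) = splitWeight a b p := by
  have subset_iff : g • p.2 ⊆ cosetsUnion {g • p.1} ↔ p.2 ⊆ cosetsUnion {p.1} := by
    rw [← Finset.smul_finset_singleton, ← smul_cosetsUnion,
      Finset.smul_finset_subset_smul_finset_iff]
  simp only [splitWeight, Prod.smul_fst, Prod.smul_snd, subset_iff, card_stabilizer_smul,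
    Finset.card_smul_finset]

theorem card_cosetsUnion_singleton {V : Subgroup G} (s : G ⧸ V) :
    (cosetsUnion {s}).card = Nat.card V := by
  rw [card_cosetsUnion, Finset.card_singleton, mul_one]

theorem card_stabilizer_dvd_card_snd {V : Subgroup G} (p : (G ⧸ V) × Finset G) :
    Nat.card (stabilizer G p) ∣ p.2.card :=
  card_dvd_card_of_le_stabilizer ((stabilizer_prod p).le.trans inf_le_right)

theorem splitWeight_pow_relIndex {V U : Subgroup G} (a b : R) {p : (G ⧸ V) × Finset G}
    (hp : p.2 ⊆ cosetsUnion {p.1}) (hU : U ≤ stabilizer G p) :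
    splitWeight a b p ^ U.relIndex (stabilizer G p) =
      a ^ (p.2.card / Nat.card U) * b ^ ((Nat.card V - p.2.card) / Nat.card U) := by
  have dvd_sub := Nat.dvd_sub (card_stabilizer_dvd_card p) (card_stabilizer_dvd_card_snd p)
  rw [splitWeight, if_pos hp, mul_pow, ← pow_mul, ← pow_mul,
    div_card_mul_relIndex hU (card_stabilizer_dvd_card_snd p), div_card_mul_relIndex hU dvd_sub]

theorem weightedMark_splitWeight (V : Subgroup G) (a b : R) :
    weightedMark G (splitWeight a b : (G ⧸ V) × Finset G → R) = orbitMark V (a + b) := by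
  cases nonempty_fintype G
  funext U
  rw [orbitMark, weightedMark, weightedMark, finsum_eq_sum_of_fintype, finsum_eq_sum_of_fintype,
    Fintype.sum_prod_type]
  refine Finset.sum_congr rfl fun s _ => ?_
  by_cases hs : U ≤ stabilizer G s
  · have hF := hs.trans (stabilizer_le_stabilizer_cosetsUnion s)
    rw [if_pos hs, relIndex_eq_card_div_card hs, card_stabilizer_quotient,
      ← card_cosetsUnion_singleton s, ← sum_pow_mul_pow_stable_subsets hF,
      card_cosetsUnion_singleton, ← Finset.sum_filter]
    have le_stabilizer_iff (T : Finset G) : U ≤ stabilizer G (s, T) ↔ U ≤ stabilizer G T := by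
      rw [stabilizer_prod, le_inf_iff, and_iff_right hs]
    symm
    refine Finset.sum_subset_zero_on_sdiff (fun T hT => ?_) (fun T hT => ?_) fun T hT => ?_
    · exact Finset.mem_filter_univ T |>.2 ((le_stabilizer_iff T).2 (Finset.mem_filter.1 hT).2)
    · simp only [Finset.mem_sdiff, Finset.mem_filter, Finset.mem_univ, Finset.mem_powerset,
        le_stabilizer_iff, true_and, not_and] at hT
      rw [splitWeight, if_neg fun hTs => hT.2 hTs hT.1, zero_pow (relIndex_ne_zero_of_finite _ _)]
    · rw [Finset.mem_filter, Finset.mem_powerset] at hT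
      exact (splitWeight_pow_relIndex a b hT.1 ((le_stabilizer_iff T).2 hT.2)).symm
  · rw [if_neg hs]
    refine Finset.sum_eq_zero fun T _ => if_neg fun h => hs (h.trans ?_)
    exact (stabilizer_prod (s, T)).le.trans inf_le_left

/-- The inclusion of `G`-sets `s ↦ (s, s)`. -/
noncomputable def fullPair (V : Subgroup G) : G ⧸ V →[G] (G ⧸ V) × Finset G where
  toFun s := (s, cosetsUnion {s})
  map_smul' g s := by rw [Prod.smul_mk, smul_cosetsUnion, Finset.smul_finset_singleton]; rfl

theorem fullPair_injective (V : Subgroup G) : Function.Injective (fullPair V) :=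
  fun _ _ h => congrArg Prod.fst h

theorem fullPair_notMem_range_emptyPair {V : Subgroup G} (s : G ⧸ V) :
    fullPair V s ∉ Set.range (emptyPair V) := by
  rintro ⟨t, ht⟩
  have : (cosetsUnion {s}).card = 0 := by
    rw [Finset.card_eq_zero]
    exact (congrArg Prod.snd ht).symm
  exact Nat.card_pos.ne' (card_cosetsUnion_singleton s ▸ this)

theorem splitWeight_comp_emptyPair (V : Subgroup G) (a b : R) :
    splitWeight a b ∘ emptyPair V = fun _ => b := by
  funext s
  have card_stabilizer : Nat.card (stabilizer G (emptyPair V s)) = Nat.card V := by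
    rw [stabilizer_map_of_injective (emptyPair_injective V), card_stabilizer_quotient]
  have subset_coset : (emptyPair V s).2 ⊆ cosetsUnion {(emptyPair V s).1} := Finset.empty_subset _
  rw [Function.comp_apply, splitWeight, card_stabilizer, if_pos subset_coset]
  change a ^ (0 / Nat.card V) * b ^ ((Nat.card V - 0) / Nat.card V) = b
  rw [Nat.zero_div, Nat.sub_zero, Nat.div_self Nat.card_pos, pow_zero, pow_one, one_mul]

theorem splitWeight_comp_fullPair (V : Subgroup G) (a b : R) :
    splitWeight a b ∘ fullPair V = fun _ => a := by
  funext s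
  have card_stabilizer : Nat.card (stabilizer G (fullPair V s)) = Nat.card V := by
    rw [stabilizer_map_of_injective (fullPair_injective V), card_stabilizer_quotient]
  have card_snd : (fullPair V s).2.card = Nat.card V := card_cosetsUnion_singleton s
  have subset_coset : (fullPair V s).2 ⊆ cosetsUnion {(fullPair V s).1} := subset_rfl
  rw [Function.comp_apply, splitWeight, card_stabilizer, if_pos subset_coset, card_snd,
    Nat.sub_self, Nat.zero_div, Nat.div_self Nat.card_pos, pow_zero, pow_one, mul_one]

/-- Stabilizers divide `|T|`, and `0 < |T| < |V|` for a proper nonempty subset `T` of a coset. -/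
theorem card_stabilizer_lt_of_splitWeight_ne_zero {V : Subgroup G} {a b : R}
    {p : (G ⧸ V) × Finset G} (hp : splitWeight a b p ≠ 0) (hempty : p ∉ Set.range (emptyPair V))
    (hfull : p ∉ Set.range (fullPair V)) : Nat.card (stabilizer G p) < Nat.card V := by
  have hsub : p.2 ⊆ cosetsUnion {p.1} := by
    by_contra h
    exact hp (if_neg h)
  have hne : p.2.Nonempty := by
    rw [Finset.nonempty_iff_ne_empty]
    exact fun h => hempty ⟨p.1, Prod.ext rfl h.symm⟩
  have hssub : p.2 ⊂ cosetsUnion {p.1} :=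
    hsub.ssubset_of_ne fun h => hfull ⟨p.1, Prod.ext rfl h.symm⟩
  calc Nat.card (stabilizer G p) ≤ p.2.card :=
        Nat.le_of_dvd hne.card_pos (card_stabilizer_dvd_card_snd p)
    _ < (cosetsUnion {p.1}).card := Finset.card_lt_card hssub
    _ = Nat.card V := card_cosetsUnion_singleton p.1

end SplitWeight

section Filtration

variable (G R : Type*) [Group G] [CommRing R]

/-- The additive group of marks generated by orbit marks of subgroups of order less than `n`.
Modulo level `n`, the orbit marks of subgroups of order `n` are additive in the weight
(`orbitMark_add_sub_mem_markFiltration`). -/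
def markFiltration (n : ℕ) : AddSubgroup (Subgroup G → R) :=
  AddSubgroup.closure {r | ∃ (W : Subgroup G) (c : R), Nat.card W < n ∧ orbitMark W c = r}

variable {G R}

theorem orbitMark_mem_markFiltration {W : Subgroup G} {n : ℕ} (hW : Nat.card W < n) (c : R) :
    orbitMark W c ∈ markFiltration G R n :=
  AddSubgroup.subset_closure ⟨W, c, hW, rfl⟩

theorem markFiltration_zero : markFiltration G R 0 = ⊥ := by
  simp only [markFiltration, not_lt_zero, false_and, exists_false, Set.ofPred_false,
    AddSubgroup.closure_empty]

variable [Finite G]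

theorem weightedMark_mem_markFiltration {S : Type*} [MulAction G S] [Finite S] {w : S → R} {n : ℕ}
    (hw : ∀ (g : G) s, w (g • s) = w s) (hn : ∀ s, w s ≠ 0 → Nat.card (stabilizer G s) < n) :
    weightedMark G w ∈ markFiltration G R n := by
  cases nonempty_fintype S
  rw [weightedMark_eq_sum_orbitMark hw]
  refine AddSubgroup.sum_mem _ fun ω _ => ?_
  by_cases hω : w ω.out = 0
  · rw [hω, orbitMark_zero]
    exact AddSubgroup.zero_mem _
  · exact orbitMark_mem_markFiltration (hn _ hω) _

theorem orbitMark_mul_mem_markFiltration (V W : Subgroup G) (a b : R) :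
    orbitMark V a * orbitMark W b ∈ markFiltration G R (Nat.card G + 1) := by
  rw [orbitMark, orbitMark, weightedMark_mul]
  refine weightedMark_mem_markFiltration (fun g p => ?_) fun p _ =>
    Nat.lt_succ_of_le (Subgroup.card_le_card_group _)
  rw [Prod.smul_fst, Prod.smul_snd, relIndex_stabilizer_smul, relIndex_stabilizer_smul]

theorem mul_mem_markFiltration {r r' : Subgroup G → R}
    (hr : r ∈ markFiltration G R (Nat.card G + 1))
    (hr' : r' ∈ markFiltration G R (Nat.card G + 1)) :
    r * r' ∈ markFiltration G R (Nat.card G + 1) := by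
  induction hr, hr' using AddSubgroup.closure_induction₂ with
  | mem _ _ hx hy =>
    obtain ⟨V, a, -, rfl⟩ := hx
    obtain ⟨W, b, -, rfl⟩ := hy
    exact orbitMark_mul_mem_markFiltration V W a b
  | zero_left => rw [zero_mul]; exact zero_mem _
  | zero_right => rw [mul_zero]; exact zero_mem _
  | add_left _ _ _ _ _ _ h₁ h₂ => rw [add_mul]; exact add_mem h₁ h₂
  | add_right _ _ _ _ _ _ h₁ h₂ => rw [mul_add]; exact add_mem h₁ h₂
  | neg_left _ _ _ _ h => rw [neg_mul]; exact neg_mem h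
  | neg_right _ _ _ _ h => rw [mul_neg]; exact neg_mem h

theorem orbitMark_add_sub_mem_markFiltration (V : Subgroup G) (a b : R) :
    orbitMark V (a + b) - (orbitMark V a + orbitMark V b) ∈ markFiltration G R (Nat.card V) := by
  set w : (G ⧸ V) × Finset G → R := splitWeight a b
  set w' := (Set.range (emptyPair V))ᶜ.indicator w with hw'
  set w'' := (Set.range (fullPair V))ᶜ.indicator w'
  have remainder : orbitMark V (a + b) - (orbitMark V a + orbitMark V b) = weightedMark G w'' := by
    have w'_full : w' ∘ fullPair V = fun _ => a := by
      rw [← splitWeight_comp_fullPair V a b]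
      funext s
      exact Set.indicator_of_mem (fullPair_notMem_range_emptyPair s) w
    rw [← weightedMark_splitWeight, weightedMark_eq_comp_add (emptyPair_injective V),
      splitWeight_comp_emptyPair, ← hw', weightedMark_eq_comp_add (fullPair_injective V) w',
      w'_full, ← orbitMark, ← orbitMark]
    abel
  rw [remainder]
  refine weightedMark_mem_markFiltration (fun g p => ?_) fun p hp => ?_
  · exact indicator_compl_range_smul _ (indicator_compl_range_smul _ (splitWeight_smul a b)) g p
  · obtain ⟨hfull, hp⟩ := Set.indicator_apply_ne_zero.1 hp
    obtain ⟨hempty, hp⟩ := Set.indicator_apply_ne_zero.1 hp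
    exact card_stabilizer_lt_of_splitWeight_ne_zero hp hempty hfull

end Filtration

section Coordinates

variable {G R : Type*} [Group G] [Fintype G] [CommRing R]

/-- The part of the ghost vector of `x` coming from subgroups of order `n`, modulo orbit marks of
smaller subgroups; in this quotient it is additive in `x`. -/
noncomputable def gradedGhost (G R : Type*) [Group G] [Fintype G] [CommRing R] (n : ℕ) :
    (SubgroupConjClasses G → R) →+ (Subgroup G → R) ⧸ markFiltration G R n :=
  AddMonoidHom.mk'
    (fun x => QuotientAddGroup.mk (∑ C with Nat.card C.out = n, orbitMark C.out (x C)))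
    fun x y => by
      rw [← QuotientAddGroup.mk_add, eq_comm, QuotientAddGroup.eq, neg_add_eq_sub,
        ← Finset.sum_add_distrib, ← Finset.sum_sub_distrib]
      refine AddSubgroup.sum_mem _ fun C hC => ?_
      rw [← (Finset.mem_filter_univ C).1 hC]
      exact orbitMark_add_sub_mem_markFiltration _ _ _

theorem gradedGhost_single (C : SubgroupConjClasses G) (c : R) :
    gradedGhost G R (Nat.card C.out) (Pi.single C c) = QuotientAddGroup.mk (orbitMark C.out c) := by
  have C_mem : C ∈ Finset.univ.filter fun D : SubgroupConjClasses G =>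
      Nat.card D.out = Nat.card C.out := (Finset.mem_filter_univ C).2 rfl
  rw [gradedGhost, AddMonoidHom.mk'_apply, Finset.sum_eq_single_of_mem C C_mem, Pi.single_eq_same]
  intro D _ hD
  rw [Pi.single_eq_of_ne hD, orbitMark_zero]

theorem mk_mem_range_gradedGhost {n : ℕ} {r : Subgroup G → R}
    (hr : r ∈ markFiltration G R (n + 1)) :
    (QuotientAddGroup.mk r : (Subgroup G → R) ⧸ markFiltration G R n) ∈
      (gradedGhost G R n).range := by
  suffices markFiltration G R (n + 1) ≤
      (gradedGhost G R n).range.comap (QuotientAddGroup.mk' (markFiltration G R n)) from this hr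
  rw [markFiltration, AddSubgroup.closure_le]
  rintro _ ⟨W, c, hW, rfl⟩
  rcases (Nat.lt_succ_iff.1 hW).lt_or_eq with hlt | rfl
  · have mk_eq_zero := (QuotientAddGroup.eq_zero_iff _).2 (orbitMark_mem_markFiltration hlt c)
    exact ⟨0, (map_zero _).trans mk_eq_zero.symm⟩
  · refine ⟨Pi.single (Quotient.mk'' W) c, ?_⟩
    rw [← card_out_mk W, gradedGhost_single, orbitMark_out_mk]
    rfl

theorem exists_eq_sum_orbitMark_of_mem_markFiltration {n : ℕ} {r : Subgroup G → R}
    (hr : r ∈ markFiltration G R n) :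
    ∃ x : SubgroupConjClasses G → R, r = ∑ C with Nat.card C.out < n, orbitMark C.out (x C) := by
  induction n generalizing r with
  | zero =>
    rw [markFiltration_zero, AddSubgroup.mem_bot] at hr
    exact ⟨0, by simp [hr]⟩
  | succ n ih =>
    obtain ⟨x, hx⟩ := mk_mem_range_gradedGhost hr
    obtain ⟨y, hy⟩ := ih (QuotientAddGroup.eq.1 hx)
    refine ⟨fun C => if Nat.card C.out = n then x C else y C, ?_⟩
    rw [neg_add_eq_iff_eq_add.1 hy]
    simp only [Finset.sum_filter]
    rw [← Finset.sum_add_distrib]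
    refine Finset.sum_congr rfl fun C _ => ?_
    rcases lt_trichotomy (Nat.card C.out) n with hC | hC | hC
    · rw [if_neg hC.ne, if_pos hC, if_pos (hC.trans n.lt_succ_self), if_neg hC.ne, zero_add]
    · rw [if_pos hC, if_neg hC.not_lt, if_pos (hC.trans_lt n.lt_succ_self), if_pos hC, add_zero]
    · rw [if_neg hC.ne', if_neg hC.not_gt, if_neg (Nat.succ_le_of_lt hC).not_gt, add_zero]

end Coordinates

section Ghost

theorem subconj_of_card_fixedPoints_ne_zero {G : Type*} [Group G] {U V : Subgroup G}
    (h : Nat.card (fixedPoints U (G ⧸ V)) ≠ 0) : Subconj U V := by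
  obtain ⟨⟨q, hq⟩⟩ := (Nat.card_ne_zero.1 h).1
  obtain ⟨g, rfl⟩ := QuotientGroup.mk_surjective q
  refine ⟨ConjAct.toConjAct g, (mem_fixedPoints_iff_le_stabilizer.1 hq).trans_eq ?_⟩
  rw [stabilizer_mk_eq_conjAct_smul]

theorem card_fixedPoints_self_ne_zero {G : Type*} [Group G] [Finite G] (U : Subgroup G) :
    Nat.card (fixedPoints U (G ⧸ U)) ≠ 0 := by
  have one_mem : ((1 : G) : G ⧸ U) ∈ fixedPoints U (G ⧸ U) :=
    mem_fixedPoints_iff_le_stabilizer.2 (stabilizer_quotient U).ge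
  exact Nat.card_ne_zero.2 ⟨⟨⟨_, one_mem⟩⟩, inferInstance⟩

variable {G R : Type*} [Group G] [Fintype G] [CommRing R]

theorem ghost_eq_sum (U : Subgroup G) (x : SubgroupConjClasses G → R) :
    ghost U x = ∑ C, orbitMark C.out (x C) U := by
  rw [ghost, finsum_eq_sum_of_fintype]
  refine Finset.sum_congr rfl fun C _ => ?_
  rw [orbitMark_apply, ite_eq_left_iff]
  intro hUC
  rw [not_imp_comm.1 subconj_of_card_fixedPoints_ne_zero hUC, Nat.cast_zero, zero_mul]

theorem ghost_map {S : Type*} [CommRing S] (f : R →+* S) (U : Subgroup G)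
    (x : SubgroupConjClasses G → R) : ghost U (fun C => f (x C)) = f (ghost U x) := by
  simp only [ghost_eq_sum, orbitMark_apply, map_sum, map_mul, map_pow, map_natCast]

theorem exists_ghost_mul (x y : SubgroupConjClasses G → R) :
    ∃ z : SubgroupConjClasses G → R, ∀ H, ghost H x * ghost H y = ghost H z := by
  have card_lt (V : Subgroup G) : Nat.card V < Nat.card G + 1 :=
    Nat.lt_succ_of_le (Subgroup.card_le_card_group V)
  have sum_mem (x : SubgroupConjClasses G → R) :
      ∑ C, orbitMark C.out (x C) ∈ markFiltration G R (Nat.card G + 1) :=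
    AddSubgroup.sum_mem _ fun C _ => orbitMark_mem_markFiltration (card_lt _) _
  obtain ⟨z, hz⟩ := exists_eq_sum_orbitMark_of_mem_markFiltration
    (mul_mem_markFiltration (sum_mem x) (sum_mem y))
  refine ⟨z, fun H => ?_⟩
  rw [Finset.filter_true_of_mem fun C _ => card_lt C.out] at hz
  simpa only [ghost_eq_sum, Finset.sum_apply, Pi.mul_apply] using congrFun hz H

end Ghost

section Support

variable {G : Type*} [Group G]

theorem Subconj.trans {U V W : Subgroup G} (hUV : Subconj U V) (hVW : Subconj V W) :
    Subconj U W := by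
  obtain ⟨g, hg⟩ := hUV
  obtain ⟨k, hk⟩ := hVW
  refine ⟨g * k, hg.trans ?_⟩
  rw [mul_smul]
  exact Subgroup.pointwise_smul_le_pointwise_smul_iff.2 hk

theorem Subconj.eq_of_card_le [Finite G] {C D : SubgroupConjClasses G}
    (h : Subconj C.out D.out) (hcard : Nat.card D.out ≤ Nat.card C.out) : C = D := by
  obtain ⟨g, hg⟩ := h
  have out_eq : C.out = g • D.out :=
    Subgroup.eq_of_le_of_card_ge hg ((card_conjAct_smul g D.out).trans_le hcard)
  rw [← Quotient.out_eq C, ← Quotient.out_eq D]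
  exact Quotient.sound ⟨g, out_eq.symm⟩

variable {A : Type*} [CommRing A] (S : Subring A)

theorem orbitMark_mem [Finite G] {U V : Subgroup G} {a : A} (ha : Subconj U V → a ∈ S) :
    orbitMark V a U ∈ S := by
  rw [orbitMark_apply]
  by_cases h0 : Nat.card (fixedPoints U (G ⧸ V)) = 0
  · rw [h0, Nat.cast_zero, zero_mul]
    exact S.zero_mem
  · exact S.mul_mem (natCast_mem S _) (S.pow_mem (ha (subconj_of_card_fixedPoints_ne_zero h0)) _)

variable [Fintype G]

theorem ghost_mem {U : Subgroup G} {x : SubgroupConjClasses G → A}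
    (hx : ∀ C : SubgroupConjClasses G, Subconj U C.out → x C ∈ S) : ghost U x ∈ S := by
  rw [ghost_eq_sum]
  exact S.sum_mem fun C _ => orbitMark_mem S (hx C)

/-- At `C.out` the ghost map is `|(G/C.out)^C.out| • z C` plus terms in the `z D` for `D` strictly
above `C`, so that downward induction on the order of the subgroups solves for `z C`. -/
theorem mem_of_forall_ghost_mem (hS : ∀ (N : ℕ) (a : A), N ≠ 0 → N * a ∈ S → a ∈ S)
    {U : Subgroup G} {z : SubgroupConjClasses G → A}
    (hz : ∀ V, Subconj U V → ghost V z ∈ S) {C : SubgroupConjClasses G}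
    (hC : Subconj U C.out) : z C ∈ S := by
  induction hn : Nat.card G - Nat.card C.out using Nat.strong_induction_on generalizing C with
  | _ n ih =>
    subst hn
    have above_mem (D : SubgroupConjClasses G) (hD : D ∈ Finset.univ.erase C) :
        orbitMark D.out (z D) C.out ∈ S := by
      refine orbitMark_mem S fun hCD => ih _ ?_ (hC.trans hCD) rfl
      have : Nat.card C.out < Nat.card D.out := by
        by_contra! hle
        exact Finset.ne_of_mem_erase hD (hCD.eq_of_card_le hle).symm
      have := Subgroup.card_le_card_group D.out
      lia
    have diagonal_mem : orbitMark C.out (z C) C.out ∈ S := by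
      have := hz _ hC
      rw [ghost_eq_sum, ← Finset.add_sum_erase _ _ (Finset.mem_univ C)] at this
      exact (S.add_mem_cancel_right (S.sum_mem above_mem)).1 this
    rw [orbitMark_apply, Nat.div_self Nat.card_pos, pow_one] at diagonal_mem
    exact hS _ _ (card_fixedPoints_self_ne_zero _) diagonal_mem

end Support

section Universal

variable {G : Type*} [Group G]

/-- The variables `a_D` (left) and `b_D` (right) with `U ⪯ D`. -/
def aboveVars (U : Subgroup G) : Set (SubgroupConjClasses G ⊕ SubgroupConjClasses G) :=
  {v | Subconj U (Sum.elim id id v).out}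

theorem exists_rename_eq_of_mem_supported_aboveVars {U : Subgroup G}
    {p : MvPolynomial (SubgroupConjClasses G ⊕ SubgroupConjClasses G) ℤ}
    (hp : p ∈ MvPolynomial.supported ℤ (aboveVars U)) :
    ∃ q : MvPolynomial ({D : SubgroupConjClasses G // Subconj U D.out} ⊕
      {D : SubgroupConjClasses G // Subconj U D.out}) ℤ,
      MvPolynomial.rename (Sum.map Subtype.val Subtype.val) q = p := by
  refine MvPolynomial.exists_rename_eq_of_vars_subset_range _ _
    (Subtype.val_injective.sumMap Subtype.val_injective)
    ((MvPolynomial.mem_supported.1 hp).trans ?_)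
  rintro (D | D) hD
  · exact ⟨Sum.inl ⟨D, hD⟩, rfl⟩
  · exact ⟨Sum.inr ⟨D, hD⟩, rfl⟩

theorem mem_supported_of_natCast_mul_mem {σ : Type*} {s : Set σ} {N : ℕ} {p : MvPolynomial σ ℤ}
    (hN : N ≠ 0) (hp : N * p ∈ MvPolynomial.supported ℤ s) : p ∈ MvPolynomial.supported ℤ s := by
  rw [MvPolynomial.mem_supported] at hp ⊢
  rwa [← map_natCast (MvPolynomial.C (R := ℤ) (σ := σ)), MvPolynomial.vars_C_mul _ (mod_cast hN)]
    at hp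

variable [Fintype G]

theorem mem_supported_of_ghost_mul_eq
    {z : SubgroupConjClasses G → MvPolynomial (SubgroupConjClasses G ⊕ SubgroupConjClasses G) ℤ}
    (hz : ∀ H : Subgroup G, ghost H (fun C => MvPolynomial.X (Sum.inl C)) *
      ghost H (fun C => MvPolynomial.X (Sum.inr C)) = ghost H z) (C : SubgroupConjClasses G) :
    z C ∈ MvPolynomial.supported ℤ (aboveVars C.out) := by
  refine mem_of_forall_ghost_mem (MvPolynomial.supported ℤ (aboveVars C.out)).toSubring
    (fun N p => mem_supported_of_natCast_mul_mem) (U := C.out) (fun V hV => ?_) ⟨1, by simp⟩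
  rw [← hz]
  exact mul_mem (ghost_mem _ fun D hD => MvPolynomial.X_mem_supported.2 (hV.trans hD))
    (ghost_mem _ fun D hD => MvPolynomial.X_mem_supported.2 (hV.trans hD))

theorem ghost_mul_eq_ghost_aeval
    {z : SubgroupConjClasses G → MvPolynomial (SubgroupConjClasses G ⊕ SubgroupConjClasses G) ℤ}
    (hz : ∀ H : Subgroup G, ghost H (fun C => MvPolynomial.X (Sum.inl C)) *
      ghost H (fun C => MvPolynomial.X (Sum.inr C)) = ghost H z)
    {R : Type*} [CommRing R] (H : Subgroup G) (x y : SubgroupConjClasses G → R) :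
    ghost H x * ghost H y = ghost H fun C => MvPolynomial.aeval (Sum.elim x y) (z C) := by
  let f : MvPolynomial (SubgroupConjClasses G ⊕ SubgroupConjClasses G) ℤ →+* R :=
    MvPolynomial.eval₂Hom (algebraMap ℤ R) (Sum.elim x y)
  have ghost_inl : ghost H x = f (ghost H fun C => MvPolynomial.X (Sum.inl C)) := by
    simp only [← ghost_map, f, MvPolynomial.eval₂Hom_X', Sum.elim_inl]
  have ghost_inr : ghost H y = f (ghost H fun C => MvPolynomial.X (Sum.inr C)) := by
    simp only [← ghost_map, f, MvPolynomial.eval₂Hom_X', Sum.elim_inr]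
  rw [ghost_inl, ghost_inr, ← map_mul, hz, ← ghost_map]
  rfl

end Universal

/-- **Existence of the multiplication Witt polynomials.**  There is a family `p_U`,
indexed by the conjugacy classes of subgroups `U ≤ G`, of integral polynomials in
variables `a_V`, `b_V` indexed by the conjugacy classes of subgroups `V ≤ G` to
which `U` is subconjugate (the left summand of the variable type gives the
`a`-variables, the right summand the `b`-variables), such that for every commutative
ring `R`, every subgroup `H ≤ G` and all Witt vectors `x, y ∈ W_G(R)` one has
`φ_H(x) · φ_H(y) = φ_H((p_U(x_V, y_V | U ⪯ V ≤ G))'_{U ≤ G})`. -/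
theorem witt_multiplication_polynomials (G : Type u) [Group G] [Fintype G] :
    ∃ p : ∀ C : SubgroupConjClasses G,
      MvPolynomial
        ({D : SubgroupConjClasses G // Subconj (Quotient.out C) (Quotient.out D)} ⊕
         {D : SubgroupConjClasses G // Subconj (Quotient.out C) (Quotient.out D)}) ℤ,
      ∀ (R : Type u) [CommRing R] (H : Subgroup G) (x y : SubgroupConjClasses G → R),
        ghost H x * ghost H y =
          ghost H (fun C => MvPolynomial.aeval
            (Sum.elim (fun D => x D.1) (fun D => y D.1)) (p C)) := by
  obtain ⟨z, hz⟩ := exists_ghost_mul (G := G)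
    (fun C => (MvPolynomial.X (Sum.inl C) : MvPolynomial (_ ⊕ SubgroupConjClasses G) ℤ))
    (fun C => MvPolynomial.X (Sum.inr C))
  choose p hp using fun C =>
    exists_rename_eq_of_mem_supported_aboveVars (mem_supported_of_ghost_mul_eq hz C)
  refine ⟨p, fun R _ H x y => ?_⟩
  rw [ghost_mul_eq_ghost_aeval hz]
  congr 1 with C
  rw [← hp C, MvPolynomial.aeval_rename, Sum.elim_comp_map]
  rfl
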